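/- The group of permutations of the 15 pieces of Lloyd's 15-puzzle achievable by sequences of legal moves that return the blank to its original cell is exactly the alternating group A_15; in particular the transposition swapping pieces 14 and 15 while fixing all other pieces is not achievable. -/

import Mathlib

/-- Cells `c, d` of the 4×4 board (encoded as `Fin 16`, cell `(i,j)` being
`4*i + j`) are adjacent if they differ by one step horizontally or vertically. -/
def cellAdj (c d : Fin 16) : Prop :=
  (c.val / 4 = d.val / 4 ∧ (c.val % 4 + 1 = d.val % 4 ∨ d.val % 4 + 1 = c.val % 4)) ∨
  (c.val % 4 = d.val % 4 ∧ (c.val / 4 + 1 = d.val / 4 ∨ d.val / 4 + 1 = c.val / 4))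

/-- A state of the 15-puzzle is a permutation of `Fin 16` (cells to contents);
the symbol `15` is the blank.  A legal move slides the piece in a cell adjacent
to the blank into the blank cell, i.e.\ precomposes with the transposition of
the two cells. -/
def PuzzleMove (s t : Equiv.Perm (Fin 16)) : Prop :=
  ∃ c d : Fin 16, cellAdj c d ∧ s d = 15 ∧ t = s * Equiv.swap c d

instance cellAdjDec (c d : Fin 16) : Decidable (cellAdj c d) := by
  unfold cellAdj; infer_instance

/-- The product of the transpositions along a walk of the blank starting in `d`. -/
def wordPerm : Fin 16 → List (Fin 16) → Equiv.Perm (Fin 16)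
  | _, [] => 1
  | d, c :: l => Equiv.swap c d * wordPerm c l

/-- The walk is legal. -/
def validWord : Fin 16 → List (Fin 16) → Bool
  | _, [] => true
  | d, c :: l => decide (cellAdj c d) && validWord c l

/-- A walk realising the three-cycle `swap 0 k * swap 0 1`. -/
def wordFor : Fin 16 → List (Fin 16)
  | 2 => [11, 7, 6, 2, 1, 0, 4, 5, 1, 2, 6, 5, 4, 0, 1, 2, 6, 7, 11, 15]
  | 3 => [11, 7, 3, 2, 6, 7, 3, 2, 1, 0, 4, 5, 1, 2, 6, 5, 4, 0, 1, 2, 3, 7, 6, 2, 3, 7, 11, 15]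
  | 4 => [11, 7, 6, 5, 4, 0, 1, 5, 6, 7, 11, 15]
  | 5 => [11, 10, 9, 8, 4, 0, 1, 5, 4, 8, 9, 10, 11, 15]
  | 6 => [11, 7, 3, 2, 1, 0, 4, 5, 1, 2, 6, 5, 4, 0, 1, 2, 3, 7, 11, 15]
  | 7 => [11, 10, 6, 7, 3, 2, 1, 0, 4, 5, 1, 2, 6, 5, 4, 0, 1, 2, 3, 7, 6, 10, 11, 15]
  | 8 => [11, 7, 6, 5, 4, 8, 9, 5, 4, 0, 1, 5, 9, 8, 4, 5, 6, 7, 11, 15]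
  | 9 => [11, 7, 6, 5, 9, 8, 4, 0, 1, 5, 4, 8, 9, 5, 6, 7, 11, 15]
  | 10 => [14, 13, 9, 10, 6, 5, 9, 8, 4, 0, 1, 5, 4, 8, 9, 5, 6, 10, 9, 13, 14, 15]
  | 11 => [14, 10, 11, 7, 6, 5, 9, 10, 6, 5, 9, 8, 4, 0, 1, 5, 4, 8, 9, 5, 6, 10, 9, 5, 6, 7, 11, 10, 14, 15]
  | 12 => [11, 10, 9, 8, 12, 13, 9, 5, 4, 8, 9, 5, 4, 0, 1, 5, 9, 8, 4, 5, 9, 13, 12, 8, 9, 10, 11, 15]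
  | 13 => [11, 10, 9, 13, 12, 8, 4, 5, 9, 8, 4, 0, 1, 5, 4, 8, 9, 5, 4, 8, 12, 13, 9, 10, 11, 15]
  | 14 => [11, 10, 14, 13, 9, 10, 6, 5, 9, 8, 4, 0, 1, 5, 4, 8, 9, 5, 6, 10, 9, 13, 14, 10, 11, 15]
  | _ => []

theorem reach_word (l : List (Fin 16)) : ∀ (d : Fin 16) (s : Equiv.Perm (Fin 16)), s d = 15 →
    validWord d l = true → Relation.ReflTransGen PuzzleMove s (s * wordPerm d l) := by
  induction l with
  | nil => intro d s _ _; simpa [wordPerm] using Relation.ReflTransGen.refl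
  | cons c l ih =>
    intro d s hs hv
    simp only [validWord, Bool.and_eq_true, decide_eq_true_eq] at hv
    have h := ih c (s * Equiv.swap c d) (by simpa using hs) hv.2
    rw [mul_assoc] at h
    exact Relation.ReflTransGen.head ⟨c, d, hv.1, hs, rfl⟩ h

theorem reach_left (g s t : Equiv.Perm (Fin 16)) (hg : g 15 = 15)
    (h : Relation.ReflTransGen PuzzleMove s t) :
    Relation.ReflTransGen PuzzleMove (g * s) (g * t) := by
  induction h with
  | refl => exact .refl
  | tail _ hm ih =>
    obtain ⟨c, d, ha, hs, rfl⟩ := hm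
    exact ih.tail ⟨c, d, ha, by simp [hs, hg], by rw [mul_assoc]⟩

/-- Achievable permutations returning the blank to its cell. -/
def Ach (π : Equiv.Perm (Fin 16)) : Prop :=
  Relation.ReflTransGen PuzzleMove 1 π ∧ π 15 = 15

theorem Ach.mul {g h : Equiv.Perm (Fin 16)} (hg : Ach g) (hh : Ach h) : Ach (g * h) := by
  refine ⟨hg.1.trans ?_, by simp [hg.2, hh.2]⟩
  simpa using reach_left g 1 h hg.2 hh.1

theorem word_valid : ∀ k : Fin 16, validWord 15 (wordFor k) = true := by decide +kernel

theorem word_eq : ∀ k : Fin 16, k ≠ 0 → k ≠ 1 → k ≠ 15 → ∀ x,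
    wordPerm 15 (wordFor k) x = (Equiv.swap 0 k * Equiv.swap 0 1 : Equiv.Perm (Fin 16)) x := by decide +kernel

theorem ach_cyc (k : Fin 16) (h0 : k ≠ 0) (hk : k ≠ 15) : Ach (Equiv.swap 0 k * Equiv.swap 0 1) := by
  by_cases h1 : k = 1
  · subst h1; simpa [Ach] using Relation.ReflTransGen.refl
  have h := reach_word (wordFor k) 15 1 rfl (word_valid k)
  rw [one_mul, Equiv.ext (word_eq k h0 h1 hk)] at h
  refine ⟨h, ?_⟩
  rw [Equiv.Perm.mul_apply, Equiv.swap_apply_of_ne_of_ne (a := (0 : Fin 16)) (b := 1) (by decide) (by decide),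
    Equiv.swap_apply_of_ne_of_ne (by decide) hk.symm]

theorem cyc_sq : ∀ k : Fin 16, k ≠ 0 → ∀ x, (Equiv.swap 0 1 * Equiv.swap 0 k : Equiv.Perm (Fin 16)) x =
    ((Equiv.swap 0 k * Equiv.swap 0 1) * (Equiv.swap 0 k * Equiv.swap 0 1) : Equiv.Perm (Fin 16)) x := by
  decide +kernel

theorem ach_cyc' (k : Fin 16) (h0 : k ≠ 0) (hk : k ≠ 15) :
    Ach (Equiv.swap 0 1 * Equiv.swap 0 k) := by
  rw [Equiv.ext (cyc_sq k h0)]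
  exact (ach_cyc k h0 hk).mul (ach_cyc k h0 hk)

/-- Achievable up to the transposition of the first two cells. -/
def Ach2 (π : Equiv.Perm (Fin 16)) : Prop := Ach π ∨ Ach (π * Equiv.swap 0 1)

theorem Ach2.step {g : Equiv.Perm (Fin 16)} (hg : Ach2 g) (k : Fin 16) (h0 : k ≠ 0)
    (hk : k ≠ 15) : Ach2 (g * Equiv.swap 0 k) := by
  rcases hg with h | h
  · right
    rw [mul_assoc]
    exact h.mul (ach_cyc k h0 hk)
  · left
    have := h.mul (ach_cyc' k h0 hk)
    rwa [mul_assoc, ← mul_assoc (Equiv.swap 0 1), Equiv.swap_mul_self, one_mul] at this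

theorem swap_conj0 : ∀ a b : Fin 16, a ≠ b → a ≠ 0 → b ≠ 0 → ∀ x,
    Equiv.swap a b x = (Equiv.swap 0 a * Equiv.swap 0 b * Equiv.swap 0 a : Equiv.Perm (Fin 16)) x := by
  decide +kernel

theorem Ach2.swap {g : Equiv.Perm (Fin 16)} (hg : Ach2 g) (a b : Fin 16) (hab : a ≠ b)
    (ha : a ≠ 15) (hb : b ≠ 15) : Ach2 (g * Equiv.swap a b) := by
  by_cases a0 : a = 0
  · subst a0; exact hg.step b hab.symm hb
  by_cases b0 : b = 0
  · subst b0; rw [Equiv.swap_comm]; exact hg.step a hab ha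
  rw [Equiv.ext (swap_conj0 a b hab a0 b0), ← mul_assoc, ← mul_assoc]
  exact ((hg.step a a0 ha).step b b0 hb).step a a0 ha

theorem ach2_ofSubtype (σ : Equiv.Perm {x : Fin 16 // x ≠ 15}) :
    Ach2 (Equiv.Perm.ofSubtype σ) := by
  induction σ using Equiv.Perm.swap_induction_on' with
  | one => left; rw [map_one]; exact ⟨.refl, rfl⟩
  | mul_swap f x y hxy ih =>
    rw [map_mul, Equiv.Perm.ofSubtype_swap_eq]
    exact ih.swap _ _ (fun h => hxy (Subtype.ext h)) x.2 y.2

theorem ach2_all (π : Equiv.Perm (Fin 16)) (h : π 15 = 15) : Ach2 π := by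
  have hp : ∀ x, π x ≠ 15 ↔ x ≠ 15 := fun x => by
    rw [not_iff_not]
    exact ⟨fun hx => π.injective (hx.trans h.symm), fun hx => hx ▸ h⟩
  have := ach2_ofSubtype (π.subtypePerm hp)
  rwa [Equiv.Perm.ofSubtype_subtypePerm] at this
  rintro x hx rfl
  exact hx h

/-- The colour of a cell. -/
def cellCol (d : Fin 16) : ℤˣ := if (d.val / 4 + d.val % 4) % 2 = 0 then 1 else -1

theorem col_adj : ∀ c d : Fin 16, cellAdj c d → c ≠ d ∧ cellCol c = cellCol d * -1 := by
  decide +kernel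

theorem sign_inv (π : Equiv.Perm (Fin 16)) (h : Relation.ReflTransGen PuzzleMove 1 π) :
    ∀ d, π d = 15 → Equiv.Perm.sign π = cellCol d := by
  induction h with
  | refl => rintro d hd; obtain rfl : d = 15 := hd; rw [map_one]; rfl
  | tail _ hm ih =>
    rename_i s t _
    obtain ⟨c, d, ha, hs, rfl⟩ := hm
    intro e he
    obtain ⟨hcd, hc⟩ := col_adj c d ha
    have hec : e = c := by
      apply (s * Equiv.swap c d).injective
      rw [he]; simp [hs]
    rw [hec, hc, Equiv.Perm.sign_mul, Equiv.Perm.sign_swap hcd, ih d hs]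

theorem sign_ach {π : Equiv.Perm (Fin 16)} (h : Ach π) : Equiv.Perm.sign π = 1 :=
  sign_inv π h.1 15 h.2

/-- The permutations of the board achievable by legal moves of the 15-puzzle
that return the blank to its original cell (cell `15`) are exactly the even
permutations fixing the blank cell — i.e.\ the achievable rearrangements of
the 15 pieces form the alternating group `A_15`.  In particular the single
transposition of pieces 14 and 15 (the contents of cells `13` and `14`) is
not achievable. -/
theorem stmt_7 :
    ({π : Equiv.Perm (Fin 16) | Relation.ReflTransGen PuzzleMove 1 π ∧ π 15 = 15} =
      {π : Equiv.Perm (Fin 16) | π 15 = 15 ∧ Equiv.Perm.sign π = 1}) ∧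
    ¬ Relation.ReflTransGen PuzzleMove 1 (Equiv.swap (13 : Fin 16) 14) := by
  refine ⟨Set.ext fun π => ⟨fun h => ⟨h.2, sign_ach h⟩, fun h => ?_⟩, fun h => ?_⟩
  · rcases ach2_all π h.1 with h' | h'
    · exact h'
    · have h2 := sign_ach h'
      rw [Equiv.Perm.sign_mul, h.2, Equiv.Perm.sign_swap (by decide)] at h2
      exact absurd h2 (by decide)
  · have h2 := sign_ach ⟨h, by decide⟩
    rw [Equiv.Perm.sign_swap (by decide)] at h2
    exact absurd h2 (by decide)
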